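/- arXiv:2107.14487 — 5 statements merged into one kernel-verified Lean document; each statement's English description precedes it below -/
import Mathlib

section
/- Let S be a CFCST system over Σ, let x → s ∈ S with s = y₁⋯yₙ, and write R_s wu for the chain R_{y₁}wu₁, R_{y₂}u₁u₂, …, R_{yₙ}uₙ₋₁u. Let Λ := R, R_s wu, R_x wu ⊢ v:⟨y⟩φ, z:φ, Γ and Λ′ := R, R_s wu ⊢ v:⟨y⟩φ, z:φ, Γ. If there exists a propagation path π(v,z) in the propagation graph of Λ with s_π(v,z) ∈ L_S(y), then there exists a propagation path π′(v,z) in the propagation graph of Λ′ with s_{π′}(v,z) ∈ L_S(y); consequently, an application of the propagation rule (Pr_⟨y⟩) followed by the structural rule (p^x_s) can be replaced by an application of (p^x_s) followed by (Pr_⟨y⟩) deriving the same end sequent R, R_s wu ⊢ v:⟨y⟩φ, Γ. -/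
/-!
Labelled sequent calculi for context-free grammar logics with converse.
-/

namespace GrammarLogic

/-- Modal formulae in negation normal form over the alphabet `α`:
literals `p`, `p̄`, and the connectives `∨`, `∧`, `⟨x⟩`, `[x]` (`x ∈ α`). -/
inductive Fml (α : Type) : Type
  | pos : ℕ → Fml α
  | neg : ℕ → Fml α
  | or  : Fml α → Fml α → Fml α
  | and : Fml α → Fml α → Fml α
  | dia : α → Fml α → Fml α
  | box : α → Fml α → Fml α

/-- Multisets of relational atoms `R_x w u` (labels are natural numbers). -/
abbrev RAtms (α : Type) : Type := Multiset (α × ℕ × ℕ)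

/-- Multisets of labelled formulae `w : φ`. -/
abbrev LFmls (α : Type) : Type := Multiset (ℕ × Fml α)

/-- The converse `s̄` of a string: reverse and apply the converse characterwise. -/
def strConv {α : Type} (bar : α → α) (s : List α) : List α := s.reverse.map bar

/-- A context-free converse-closed string rewriting (CFCST) system over `α`
with converse operation `bar`: a finite set of production rules closed under
converses. -/
structure CFCST (α : Type) (bar : α → α) : Type where
  rules : Set (α × List α)
  finite : rules.Finite
  closed : ∀ x s, (x, s) ∈ rules ↔ (bar x, strConv bar s) ∈ rules

/-- One-step rewriting: replace an occurrence of the head of a production rule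
by its body. -/
def OneStep {α : Type} (P : Set (α × List α)) (s t : List α) : Prop :=
  ∃ u v x r, (x, r) ∈ P ∧ s = u ++ x :: v ∧ t = u ++ r ++ v

/-- `Lang P x s` iff `x →*_S s`, i.e. `s ∈ L_S(x)`. -/
def Lang {α : Type} (P : Set (α × List α)) (x : α) (s : List α) : Prop :=
  Relation.ReflTransGen (OneStep P) [x] s

/-- Edges of the propagation graph determined by the relational atoms `R`:
each `R_x w u` in `R` gives an edge `(w,u)` labelled `x` and an edge `(u,w)`
labelled `x̄`. -/
def Edge {α : Type} (bar : α → α) (R : RAtms α) (w u : ℕ) (c : α) : Prop :=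
  (c, w, u) ∈ R ∨ (bar c, u, w) ∈ R

/-- `PPath bar R w u s`: there is a (possibly empty) propagation path from `w`
to `u` in the propagation graph determined by `R` whose string is `s`. -/
inductive PPath {α : Type} (bar : α → α) (R : RAtms α) : ℕ → ℕ → List α → Prop
  | nil (w : ℕ) : PPath bar R w w []
  | cons {w u v : ℕ} {c : α} {s : List α} :
      Edge bar R w u c → PPath bar R u v s → PPath bar R w v (c :: s)

/-- Side condition of the propagation rule `(Pr_⟨x⟩)`: there is a propagation
path from `w` to `u` whose string belongs to `L_S(x)`. -/
def PropCond {α : Type} (bar : α → α) (P : Set (α × List α)) (R : RAtms α)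
    (x : α) (w u : ℕ) : Prop :=
  ∃ s, PPath bar R w u s ∧ Lang P x s

/-- The label `v` occurs in the labelled sequent `R ⊢ Γ`. -/
def occursIn {α : Type} (v : ℕ) (R : RAtms α) (Γ : LFmls α) : Prop :=
  (∃ x w u, (x, w, u) ∈ R ∧ (v = w ∨ v = u)) ∨ ∃ φ, (v, φ) ∈ Γ

/-- `ChainR s w u C`: the multiset `C` is a chain of relational atoms `R_s w u`
(for `s = ε` it is empty and `u = w`). -/
inductive ChainR {α : Type} : List α → ℕ → ℕ → RAtms α → Prop
  | nil (w : ℕ) : ChainR [] w w 0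
  | cons {y : α} {s : List α} {w v u : ℕ} {C : RAtms α} :
      ChainR s v u C → ChainR (y :: s) w u ((y, w, v) ::ₘ C)

/-- Gated labelled sequent calculi for grammar logics.  The rules `(id)`, `(∨r)`,
`(∧r)` and `([x])` are always present; the rules `(⟨x⟩)`, the propagation rules
`(Pr_⟨x⟩)`, the structural rules `(p^x_s)` (for `x → s ∈ P`) and the converse
rules `(C1^x)` are present exactly when the respective gates `gDia`, `gPr`,
`gProd`, `gCnv` hold.  In particular, `Der bar P True False True True` is the
labelled calculus `G3Km(S)` and `Der bar P False True False False` is the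
refined labelled calculus `Km(S)L`. -/
inductive Der {α : Type} (bar : α → α) (P : Set (α × List α))
    (gDia gPr gProd gCnv : Prop) : RAtms α → LFmls α → Prop
  | id (R : RAtms α) (Γ : LFmls α) (w p : ℕ) :
      Der bar P gDia gPr gProd gCnv R ((w, Fml.pos p) ::ₘ (w, Fml.neg p) ::ₘ Γ)
  | orr {R : RAtms α} {Γ : LFmls α} {w : ℕ} {φ ψ : Fml α} :
      Der bar P gDia gPr gProd gCnv R ((w, φ) ::ₘ (w, ψ) ::ₘ Γ) →
      Der bar P gDia gPr gProd gCnv R ((w, Fml.or φ ψ) ::ₘ Γ)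
  | andr {R : RAtms α} {Γ : LFmls α} {w : ℕ} {φ ψ : Fml α} :
      Der bar P gDia gPr gProd gCnv R ((w, φ) ::ₘ Γ) →
      Der bar P gDia gPr gProd gCnv R ((w, ψ) ::ₘ Γ) →
      Der bar P gDia gPr gProd gCnv R ((w, Fml.and φ ψ) ::ₘ Γ)
  | boxr {R : RAtms α} {Γ : LFmls α} {w u : ℕ} {x : α} {φ : Fml α} :
      ¬ occursIn u R ((w, Fml.box x φ) ::ₘ Γ) →
      Der bar P gDia gPr gProd gCnv ((x, w, u) ::ₘ R) ((u, φ) ::ₘ Γ) →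
      Der bar P gDia gPr gProd gCnv R ((w, Fml.box x φ) ::ₘ Γ)
  | diar {R : RAtms α} {Γ : LFmls α} {w u : ℕ} {x : α} {φ : Fml α} :
      gDia →
      Der bar P gDia gPr gProd gCnv ((x, w, u) ::ₘ R)
        ((w, Fml.dia x φ) ::ₘ (u, φ) ::ₘ Γ) →
      Der bar P gDia gPr gProd gCnv ((x, w, u) ::ₘ R) ((w, Fml.dia x φ) ::ₘ Γ)
  | pr {R : RAtms α} {Γ : LFmls α} {w u : ℕ} {x : α} {φ : Fml α} :
      gPr → PropCond bar P R x w u →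
      Der bar P gDia gPr gProd gCnv R ((w, Fml.dia x φ) ::ₘ (u, φ) ::ₘ Γ) →
      Der bar P gDia gPr gProd gCnv R ((w, Fml.dia x φ) ::ₘ Γ)
  | prodr {R C : RAtms α} {Γ : LFmls α} {x : α} {s : List α} {w u : ℕ} :
      gProd → (x, s) ∈ P → ChainR s w u C →
      Der bar P gDia gPr gProd gCnv (C + ((x, w, u) ::ₘ R)) Γ →
      Der bar P gDia gPr gProd gCnv (C + R) Γ
  | cnvr {R : RAtms α} {Γ : LFmls α} {x : α} {w u : ℕ} :
      gCnv →
      Der bar P gDia gPr gProd gCnv ((x, w, u) ::ₘ (bar x, u, w) ::ₘ R) Γ →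
      Der bar P gDia gPr gProd gCnv ((x, w, u) ::ₘ R) Γ

/-- The labelled calculus `G3Km(S)`. -/
abbrev G3Km {α : Type} (bar : α → α) (S : CFCST α bar) : RAtms α → LFmls α → Prop :=
  Der bar S.rules True False True True

/-- The refined labelled calculus `Km(S)L`. -/
abbrev KmL {α : Type} (bar : α → α) (S : CFCST α bar) : RAtms α → LFmls α → Prop :=
  Der bar S.rules False True False False

theorem PPath.append {α : Type} {bar : α → α} {R : RAtms α} {a b c : ℕ} {s t : List α}
    (h : PPath bar R a b s) (k : PPath bar R b c t) : PPath bar R a c (s ++ t) := by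
  induction h with
  | nil _ => exact k
  | cons e _ ih => exact PPath.cons e (ih k)

theorem PPath.rev {α : Type} {bar : α → α} (hbar : Function.Involutive bar) {R : RAtms α}
    {a b : ℕ} {s : List α} (h : PPath bar R a b s) : PPath bar R b a (strConv bar s) := by
  induction h with
  | nil w => exact PPath.nil w
  | @cons w u v c s e _ ih =>
    have e' : Edge bar R u w (bar c) := by
      rcases e with e | e
      · right
        rwa [hbar c]
      · exact Or.inl e
    have := ih.append (PPath.cons e' (PPath.nil w))
    simpa [strConv] using this

theorem PPath.mono {α : Type} {bar : α → α} {R R' : RAtms α} (hR : ∀ e ∈ R, e ∈ R')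
    {a b : ℕ} {s : List α} (h : PPath bar R a b s) : PPath bar R' a b s := by
  induction h with
  | nil w => exact PPath.nil w
  | cons e _ ih => exact PPath.cons (e.imp (hR _) (hR _)) ih

theorem ChainR.path {α : Type} (bar : α → α) {s : List α} {w u : ℕ} {C : RAtms α}
    (h : ChainR s w u C) : PPath bar C w u s := by
  induction h with
  | nil w => exact PPath.nil w
  | cons _ ih =>
    exact PPath.cons (Or.inl (Multiset.mem_cons_self _ _))
      (ih.mono (fun e he => Multiset.mem_cons_of_mem he))

theorem OneStep.ctx {α : Type} {P : Set (α × List α)} (p q : List α) {s t : List α}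
    (h : OneStep P s t) : OneStep P (p ++ s ++ q) (p ++ t ++ q) := by
  obtain ⟨a, b, x, r, hx, rfl, rfl⟩ := h
  exact ⟨p ++ a, b ++ q, x, r, hx, by simp, by simp⟩

theorem steps_ctx {α : Type} {P : Set (α × List α)} (p q : List α) {s t : List α}
    (h : Relation.ReflTransGen (OneStep P) s t) :
    Relation.ReflTransGen (OneStep P) (p ++ s ++ q) (p ++ t ++ q) := by
  induction h with
  | refl => exact Relation.ReflTransGen.refl
  | tail _ k ih => exact ih.tail (k.ctx p q)

theorem rule_step {α : Type} {P : Set (α × List α)} {x : α} {s : List α}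
    (h : (x, s) ∈ P) : Relation.ReflTransGen (OneStep P) [x] s :=
  Relation.ReflTransGen.single ⟨[], [], x, s, h, by simp, by simp⟩

theorem edge_replace {α : Type} {bar : α → α} (hbar : Function.Involutive bar)
    (S : CFCST α bar) {x : α} {s : List α} (hxs : (x, s) ∈ S.rules)
    {w u : ℕ} {C R : RAtms α} (hC : ChainR s w u C) {a b : ℕ} {c : α}
    (e : Edge bar (C + ((x, w, u) ::ₘ R)) a b c) :
    ∃ t, PPath bar (C + R) a b t ∧ Relation.ReflTransGen (OneStep S.rules) [c] t := by
  have hp : PPath bar (C + R) w u s :=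
    (hC.path bar).mono (fun e he => Multiset.mem_add.2 (Or.inl he))
  have key : ∀ f ∈ C + ((x, w, u) ::ₘ R), f ∈ C + R ∨ f = (x, w, u) := by
    intro f hf
    simp only [Multiset.mem_add, Multiset.mem_cons] at hf ⊢
    tauto
  rcases e with e | e
  · rcases key _ e with h | h
    · exact ⟨[c], PPath.cons (Or.inl h) (PPath.nil _), Relation.ReflTransGen.refl⟩
    · simp only [Prod.mk.injEq] at h
      obtain ⟨rfl, rfl, rfl⟩ := h
      exact ⟨s, hp, rule_step hxs⟩
  · rcases key _ e with h | h
    · exact ⟨[c], PPath.cons (Or.inr h) (PPath.nil _), Relation.ReflTransGen.refl⟩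
    · simp only [Prod.mk.injEq] at h
      obtain ⟨h1, rfl, rfl⟩ := h
      refine ⟨strConv bar s, hp.rev hbar, rule_step ?_⟩
      have := (S.closed x s).1 hxs
      rwa [← h1, hbar c] at this

theorem path_replace {α : Type} {bar : α → α} (hbar : Function.Involutive bar)
    (S : CFCST α bar) {x : α} {s : List α} (hxs : (x, s) ∈ S.rules)
    {w u : ℕ} {C R : RAtms α} (hC : ChainR s w u C) {a b : ℕ} {r : List α}
    (h : PPath bar (C + ((x, w, u) ::ₘ R)) a b r) :
    ∃ t, PPath bar (C + R) a b t ∧ Relation.ReflTransGen (OneStep S.rules) r t := by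
  induction h with
  | nil w => exact ⟨[], PPath.nil w, Relation.ReflTransGen.refl⟩
  | @cons a' b' c' c r e _ ih =>
    obtain ⟨t, ht, hr⟩ := ih
    obtain ⟨t', ht', hr'⟩ := edge_replace hbar S hxs hC e
    refine ⟨t' ++ t, ht'.append ht, ?_⟩
    have h1 := steps_ctx [] r hr'
    have h2 := steps_ctx t' [] hr
    simp only [List.nil_append, List.append_nil, List.singleton_append] at h1 h2
    exact h1.trans h2

/-- Let `S` be a CFCST system, `x → s ∈ S`, and let `C` be a
chain `R_s w u`.  If there is a propagation path `π(v,z)` in the propagation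
graph of `Λ := R, R_s wu, R_x wu ⊢ v:⟨y⟩φ, z:φ, Γ` with `s_π(v,z) ∈ L_S(y)`,
then there is a propagation path `π'(v,z)` in the propagation graph of
`Λ' := R, R_s wu ⊢ v:⟨y⟩φ, z:φ, Γ` with `s_{π'}(v,z) ∈ L_S(y)`; consequently an
application of `(Pr_⟨y⟩)` followed by `(p^x_s)` can be replaced by `(p^x_s)`
followed by `(Pr_⟨y⟩)`, deriving the same end sequent `R, R_s wu ⊢ v:⟨y⟩φ, Γ`. -/
theorem permute_prod_above_pr {α : Type} (bar : α → α)
    (hbar : Function.Involutive bar) (S : CFCST α bar)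
    (x y : α) (s : List α) (hxs : (x, s) ∈ S.rules)
    (w u v z : ℕ) (C R : RAtms α) (hC : ChainR s w u C)
    (φ : Fml α) (Γ : LFmls α)
    (hπ : PropCond bar S.rules (C + ((x, w, u) ::ₘ R)) y v z) :
    PropCond bar S.rules (C + R) y v z ∧
      (Der bar S.rules True True True True (C + ((x, w, u) ::ₘ R))
          ((v, Fml.dia y φ) ::ₘ (z, φ) ::ₘ Γ) →
        Der bar S.rules True True True True (C + R) ((v, Fml.dia y φ) ::ₘ Γ)) := by
  have h : PropCond bar S.rules (C + R) y v z := by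
    obtain ⟨r, hr, hl⟩ := hπ
    obtain ⟨t, ht, hs⟩ := path_replace hbar S hxs hC hr
    exact ⟨t, ht, Relation.ReflTransGen.trans hl hs⟩
  exact ⟨h, fun d => Der.pr trivial h (Der.prodr trivial hxs hC d)⟩

end GrammarLogic
end

section
/- Let S be a CFCST system over Σ. For every x ∈ Σ, the converse rule (C1^x) is eliminable in G3Km(S) + {(Pr_⟨x⟩) : x ∈ Σ} − {(p^x_s) : x → s ∈ S}: every labelled sequent derivable in the calculus whose rules are (id), (∨r), (∧r), ([x]), (⟨x⟩), the propagation rules (Pr_⟨x⟩) (x ∈ Σ) and the converse rules (C1^x) (x ∈ Σ) is derivable in this calculus without any use of the rules (C1^x). -/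
/-!
Labelled sequent calculi for context-free grammar logics with converse.
-/

namespace GrammarLogic

/-- Edges are symmetric up to converse. -/
theorem edge_bar {α : Type} {bar : α → α} (hbar : Function.Involutive bar)
    {R : RAtms α} {w u : ℕ} {c : α} (h : Edge bar R w u c) : Edge bar R u w (bar c) := by
  rcases h with h | h
  · right; rwa [hbar c]
  · left; exact h

/-- Propagation paths transfer along an edge-preserving inclusion. -/
theorem ppath_transfer {α : Type} {bar : α → α} (hbar : Function.Involutive bar)
    {R R' : RAtms α} (hE : ∀ x w u, (x, w, u) ∈ R → Edge bar R' w u x)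
    {w u : ℕ} {s : List α} (h : PPath bar R w u s) : PPath bar R' w u s := by
  induction h with
  | nil w => exact PPath.nil w
  | cons he _ ih =>
    refine PPath.cons ?_ ih
    rcases he with he | he
    · exact hE _ _ _ he
    · have := edge_bar hbar (hE _ _ _ he)
      rwa [hbar] at this

/-- Generalization: one may replace the relational atoms by any multiset with the same
propagation edges and no new labels. -/
theorem cnv_elim_aux {α : Type} (bar : α → α) (hbar : Function.Involutive bar)
    (P : Set (α × List α)) (R : RAtms α) (Γ : LFmls α)
    (h : Der bar P True True False True R Γ) :
    ∀ R' : RAtms α, (∀ x w u, (x, w, u) ∈ R → Edge bar R' w u x) →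
      (∀ v, (∃ x w u, (x, w, u) ∈ R' ∧ (v = w ∨ v = u)) →
        ∃ x w u, (x, w, u) ∈ R ∧ (v = w ∨ v = u)) →
      Der bar P True True False False R' Γ := by
  induction h with
  | id R Γ w p => intro R' _ _; exact Der.id R' Γ w p
  | orr _ ih => intro R' h1 h2; exact Der.orr (ih R' h1 h2)
  | andr _ _ ih1 ih2 => intro R' h1 h2; exact Der.andr (ih1 R' h1 h2) (ih2 R' h1 h2)
  | @boxr R Γ w u x φ hf _ ih =>
    intro R' h1 h2
    refine Der.boxr (u := u) ?_ (ih _ ?_ ?_)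
    · rintro (h | h)
      · exact hf (Or.inl (h2 _ h))
      · exact hf (Or.inr h)
    · intro y a b hm
      rcases Multiset.mem_cons.1 hm with hm | hm
      · left; rw [hm]; exact Multiset.mem_cons_self _ _
      · rcases h1 _ _ _ hm with h | h
        · exact Or.inl (Multiset.mem_cons_of_mem h)
        · exact Or.inr (Multiset.mem_cons_of_mem h)
    · rintro v ⟨y, a, b, hm, hv⟩
      rcases Multiset.mem_cons.1 hm with hm | hm
      · exact ⟨y, a, b, by rw [hm]; exact Multiset.mem_cons_self _ _, hv⟩
      · obtain ⟨y', a', b', hm', hv'⟩ := h2 v ⟨y, a, b, hm, hv⟩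
        exact ⟨y', a', b', Multiset.mem_cons_of_mem hm', hv'⟩
  | @diar R Γ w u x φ _ _ ih =>
    intro R' h1 h2
    exact Der.pr trivial
      ⟨[x], PPath.cons (h1 _ _ _ (Multiset.mem_cons_self _ _)) (PPath.nil u),
        Relation.ReflTransGen.refl⟩ (ih R' h1 h2)
  | pr _ hp _ ih =>
    intro R' h1 h2
    obtain ⟨s, hs, hl⟩ := hp
    exact Der.pr trivial ⟨s, ppath_transfer hbar h1 hs, hl⟩ (ih R' h1 h2)
  | prodr hF => exact hF.elim
  | @cnvr R Γ x w u _ _ ih =>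
    intro R' h1 h2
    refine ih R' ?_ ?_
    · intro y a b hm
      rcases Multiset.mem_cons.1 hm with hm | hm
      · exact h1 _ _ _ (by rw [hm]; exact Multiset.mem_cons_self _ _)
      · rcases Multiset.mem_cons.1 hm with hm | hm
        · cases hm
          exact edge_bar hbar (h1 _ _ _ (Multiset.mem_cons_self _ _))
        · exact h1 _ _ _ (Multiset.mem_cons_of_mem hm)
    · intro v hv
      obtain ⟨y, a, b, hm, hv⟩ := h2 v hv
      refine ⟨y, a, b, ?_, hv⟩
      rcases Multiset.mem_cons.1 hm with hm | hm
      · rw [hm]; exact Multiset.mem_cons_self _ _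
      · exact Multiset.mem_cons_of_mem (Multiset.mem_cons_of_mem hm)

/-- Let `S` be a CFCST system over `Σ`.  For every `x ∈ Σ` the
converse rule `(C1^x)` is eliminable in
`G3Km(S) + {(Pr_⟨x⟩) : x ∈ Σ} − {(p^x_s) : x → s ∈ S}`: every labelled sequent
derivable in the calculus with rules `(id)`, `(∨r)`, `(∧r)`, `([x])`, `(⟨x⟩)`,
the propagation rules `(Pr_⟨x⟩)` and the converse rules `(C1^x)` is derivable in
this calculus without any use of the rules `(C1^x)`. -/
theorem cnv_eliminable {α : Type} (bar : α → α) (hbar : Function.Involutive bar)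
    (S : CFCST α bar) (R : RAtms α) (Γ : LFmls α)
    (h : Der bar S.rules True True False True R Γ) :
    Der bar S.rules True True False False R Γ := by
  exact cnv_elim_aux bar hbar S.rules R Γ h R (fun _ _ _ hm => Or.inl hm) (fun _ hv => hv)

end GrammarLogic
end

section
/- Let S be a CFCST system over Σ. Every derivation in Km(S)L of a labelled sequent of the form ∅ ⊢ w:φ is a labelled tree derivation with the fixed root property, with root w. -/
/-!
Labelled sequent calculi for context-free grammar logics with converse.
-/

namespace GrammarLogic

/-- Derivations (proof trees) in the refined labelled calculus `Km(S)L`. -/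
inductive DTree {α : Type} (bar : α → α) (P : Set (α × List α)) :
    RAtms α → LFmls α → Type
  | id (R : RAtms α) (Γ : LFmls α) (w p : ℕ) :
      DTree bar P R ((w, Fml.pos p) ::ₘ (w, Fml.neg p) ::ₘ Γ)
  | orr (R : RAtms α) (Γ : LFmls α) (w : ℕ) (φ ψ : Fml α) :
      DTree bar P R ((w, φ) ::ₘ (w, ψ) ::ₘ Γ) →
      DTree bar P R ((w, Fml.or φ ψ) ::ₘ Γ)
  | andr (R : RAtms α) (Γ : LFmls α) (w : ℕ) (φ ψ : Fml α) :
      DTree bar P R ((w, φ) ::ₘ Γ) → DTree bar P R ((w, ψ) ::ₘ Γ) →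
      DTree bar P R ((w, Fml.and φ ψ) ::ₘ Γ)
  | boxr (R : RAtms α) (Γ : LFmls α) (w u : ℕ) (x : α) (φ : Fml α) :
      ¬ occursIn u R ((w, Fml.box x φ) ::ₘ Γ) →
      DTree bar P ((x, w, u) ::ₘ R) ((u, φ) ::ₘ Γ) →
      DTree bar P R ((w, Fml.box x φ) ::ₘ Γ)
  | pr (R : RAtms α) (Γ : LFmls α) (w u : ℕ) (x : α) (φ : Fml α) :
      PropCond bar P R x w u →
      DTree bar P R ((w, Fml.dia x φ) ::ₘ (u, φ) ::ₘ Γ) →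
      DTree bar P R ((w, Fml.dia x φ) ::ₘ Γ)

/-- `InDer d R' Γ'`: the labelled sequent `R' ⊢ Γ'` occurs in the derivation `d`. -/
inductive InDer {α : Type} {bar : α → α} {P : Set (α × List α)} :
    ∀ {R : RAtms α} {Γ : LFmls α}, DTree bar P R Γ → RAtms α → LFmls α → Prop
  | here {R : RAtms α} {Γ : LFmls α} (d : DTree bar P R Γ) : InDer d R Γ
  | orr {R : RAtms α} {Γ : LFmls α} {w : ℕ} {φ ψ : Fml α}
      {R' : RAtms α} {Γ' : LFmls α}
      (d : DTree bar P R ((w, φ) ::ₘ (w, ψ) ::ₘ Γ)) :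
      InDer d R' Γ' → InDer (DTree.orr R Γ w φ ψ d) R' Γ'
  | andrL {R : RAtms α} {Γ : LFmls α} {w : ℕ} {φ ψ : Fml α}
      {R' : RAtms α} {Γ' : LFmls α}
      (d₁ : DTree bar P R ((w, φ) ::ₘ Γ)) (d₂ : DTree bar P R ((w, ψ) ::ₘ Γ)) :
      InDer d₁ R' Γ' → InDer (DTree.andr R Γ w φ ψ d₁ d₂) R' Γ'
  | andrR {R : RAtms α} {Γ : LFmls α} {w : ℕ} {φ ψ : Fml α}
      {R' : RAtms α} {Γ' : LFmls α}
      (d₁ : DTree bar P R ((w, φ) ::ₘ Γ)) (d₂ : DTree bar P R ((w, ψ) ::ₘ Γ)) :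
      InDer d₂ R' Γ' → InDer (DTree.andr R Γ w φ ψ d₁ d₂) R' Γ'
  | boxr {R : RAtms α} {Γ : LFmls α} {w u : ℕ} {x : α} {φ : Fml α}
      {R' : RAtms α} {Γ' : LFmls α}
      (hf : ¬ occursIn u R ((w, Fml.box x φ) ::ₘ Γ))
      (d : DTree bar P ((x, w, u) ::ₘ R) ((u, φ) ::ₘ Γ)) :
      InDer d R' Γ' → InDer (DTree.boxr R Γ w u x φ hf d) R' Γ'
  | pr {R : RAtms α} {Γ : LFmls α} {w u : ℕ} {x : α} {φ : Fml α}
      {R' : RAtms α} {Γ' : LFmls α}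
      (hp : PropCond bar P R x w u)
      (d : DTree bar P R ((w, Fml.dia x φ) ::ₘ (u, φ) ::ₘ Γ)) :
      InDer d R' Γ' → InDer (DTree.pr R Γ w u x φ hp d) R' Γ'

/-- Directed paths in the sequent graph of a labelled sequent, recorded as the
list of traversed (labelled) edges. -/
inductive TPath {α : Type} (R : RAtms α) : ℕ → ℕ → List (α × ℕ) → Prop
  | nil (w : ℕ) : TPath R w w []
  | cons {w u v : ℕ} {x : α} {l : List (α × ℕ)} :
      (x, w, u) ∈ R → TPath R u v l → TPath R w v ((x, u) :: l)

/-- `R ⊢ Γ` is a labelled tree sequent with root `r`: its sequent graph is a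
tree rooted at `r`, i.e. there is a unique directed path from `r` to every
vertex. -/
def TreeSeq {α : Type} (R : RAtms α) (Γ : LFmls α) (r : ℕ) : Prop :=
  occursIn r R Γ ∧ ∀ v, occursIn v R Γ → ∃! l, TPath R r v l

theorem TreeSeq.congr {α : Type} {R : RAtms α} {Γ Γ' : LFmls α} {r : ℕ}
    (h : TreeSeq R Γ r) (e : ∀ v, occursIn v R Γ ↔ occursIn v R Γ') : TreeSeq R Γ' r :=
  ⟨(e r).1 h.1, fun v hv => h.2 v ((e v).2 hv)⟩

theorem PPath.occurs {α : Type} {bar : α → α} {R : RAtms α} {Γ : LFmls α} {w u : ℕ} {s : List α}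
    (h : PPath bar R w u s) : occursIn w R Γ → occursIn u R Γ := by
  induction h with
  | nil w => exact fun h => h
  | cons he _ ih =>
    intro _
    apply ih
    rcases he with he | he
    · exact Or.inl ⟨_, _, _, he, Or.inr rfl⟩
    · exact Or.inl ⟨_, _, _, he, Or.inl rfl⟩

theorem TPath.weaken {α : Type} {R : RAtms α} {e : α × ℕ × ℕ} {a b : ℕ} {l : List (α × ℕ)}
    (h : TPath R a b l) : TPath (e ::ₘ R) a b l := by
  induction h with
  | nil w => exact TPath.nil w
  | cons he _ ih => exact TPath.cons (Multiset.mem_cons_of_mem he) ih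

theorem TPath.snoc {α : Type} {R : RAtms α} {a b c : ℕ} {x : α} {l : List (α × ℕ)}
    (h : TPath R a b l) (he : (x, b, c) ∈ R) : TPath R a c (l ++ [(x, c)]) := by
  induction h with
  | nil w => exact TPath.cons he (TPath.nil _)
  | cons h1 _ ih => exact TPath.cons h1 (ih he)

theorem TPath.inv {α : Type} {R : RAtms α} {w u : ℕ} {x : α}
    (hwu : w ≠ u) (hf : ∀ y a b, (y, a, b) ∈ R → a ≠ u ∧ b ≠ u)
    {a v : ℕ} {l : List (α × ℕ)} (h : TPath ((x, w, u) ::ₘ R) a v l) :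
    (v ≠ u → TPath R a v l) ∧
    (v = u → (a = u ∧ l = []) ∨ ∃ l', l = l' ++ [(x, u)] ∧ TPath R a w l') := by
  induction h with
  | nil w => exact ⟨fun _ => TPath.nil _, fun h => Or.inl ⟨h, rfl⟩⟩
  | cons he hp ih =>
    rcases Multiset.mem_cons.1 he with he | he
    · simp only [Prod.mk.injEq] at he
      obtain ⟨rfl, rfl, rfl⟩ := he
      cases hp with
      | nil => exact ⟨fun h => absurd rfl h, fun _ => Or.inr ⟨[], rfl, TPath.nil _⟩⟩
      | cons h2 _ =>
        rcases Multiset.mem_cons.1 h2 with h2 | h2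
        · simp only [Prod.mk.injEq] at h2
          exact absurd h2.2.1.symm hwu
        · exact absurd rfl (hf _ _ _ h2).1
    · refine ⟨fun hv => TPath.cons he (ih.1 hv), fun hv => Or.inr ?_⟩
      rcases ih.2 hv with ⟨h1, _⟩ | ⟨l', rfl, h2⟩
      · exact absurd h1 (hf _ _ _ he).2
      · exact ⟨_ :: l', rfl, TPath.cons he h2⟩

theorem TreeSeq.box {α : Type} {R : RAtms α} {Γ : LFmls α} {r w u : ℕ} {x : α} {φ : Fml α}
    (hfr : ¬ occursIn u R ((w, Fml.box x φ) ::ₘ Γ))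
    (h : TreeSeq R ((w, Fml.box x φ) ::ₘ Γ) r) :
    TreeSeq ((x, w, u) ::ₘ R) ((u, φ) ::ₘ Γ) r := by
  have hw : occursIn w R ((w, Fml.box x φ) ::ₘ Γ) := Or.inr ⟨_, Multiset.mem_cons_self _ _⟩
  have hwu : w ≠ u := by rintro rfl; exact hfr hw
  have hru : r ≠ u := by rintro rfl; exact hfr h.1
  have hf : ∀ y a b, (y, a, b) ∈ R → a ≠ u ∧ b ≠ u := by
    intro y a b hm
    constructor
    · rintro rfl; exact hfr (Or.inl ⟨_, _, _, hm, Or.inl rfl⟩)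
    · rintro rfl; exact hfr (Or.inl ⟨_, _, _, hm, Or.inr rfl⟩)
  have hocc : ∀ v, occursIn v ((x, w, u) ::ₘ R) ((u, φ) ::ₘ Γ) ↔
      v = u ∨ occursIn v R ((w, Fml.box x φ) ::ₘ Γ) := by
    intro v
    constructor
    · rintro (⟨y, a, b, hm, hv⟩ | ⟨ψ, hm⟩)
      · rcases Multiset.mem_cons.1 hm with hm | hm
        · simp only [Prod.mk.injEq] at hm
          obtain ⟨rfl, rfl, rfl⟩ := hm
          rcases hv with rfl | rfl
          · exact Or.inr hw
          · exact Or.inl rfl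
        · exact Or.inr (Or.inl ⟨y, a, b, hm, hv⟩)
      · rcases Multiset.mem_cons.1 hm with hm | hm
        · exact Or.inl (Prod.mk.inj hm).1
        · exact Or.inr (Or.inr ⟨ψ, Multiset.mem_cons_of_mem hm⟩)
    · rintro (rfl | ⟨y, a, b, hm, hv⟩ | ⟨ψ, hm⟩)
      · exact Or.inr ⟨φ, Multiset.mem_cons_self _ _⟩
      · exact Or.inl ⟨y, a, b, Multiset.mem_cons_of_mem hm, hv⟩
      · rcases Multiset.mem_cons.1 hm with hm | hm
        · exact Or.inl ⟨x, w, u, Multiset.mem_cons_self _ _, Or.inl (Prod.mk.inj hm).1⟩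
        · exact Or.inr ⟨ψ, Multiset.mem_cons_of_mem hm⟩
  refine ⟨(hocc r).2 (Or.inr h.1), fun v hv => ?_⟩
  by_cases hvu : v = u
  · subst hvu
    obtain ⟨l, hl, hu⟩ := h.2 w hw
    refine ⟨l ++ [(x, v)], hl.weaken.snoc (Multiset.mem_cons_self _ _), fun m hm => ?_⟩
    rcases (TPath.inv hwu hf hm).2 rfl with ⟨h1, _⟩ | ⟨l', rfl, h2⟩
    · exact absurd h1 hru
    · rw [hu l' h2]
  · obtain ⟨l, hl, hu⟩ := h.2 v (((hocc v).1 hv).resolve_left hvu)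
    exact ⟨l, hl.weaken, fun m hm => hu m ((TPath.inv hwu hf hm).1 hvu)⟩

theorem InDer.tree {α : Type} {bar : α → α} {P : Set (α × List α)} {R : RAtms α} {Γ : LFmls α}
    {d : DTree bar P R Γ} {R' : RAtms α} {Γ' : LFmls α} {r : ℕ} (h : InDer d R' Γ') :
    TreeSeq R Γ r → TreeSeq R' Γ' r := by
  induction h with
  | here d => exact fun h => h
  | orr d _ ih =>
    refine fun h => ih (h.congr fun v => ?_)
    simp only [occursIn, Multiset.mem_cons, Prod.mk.injEq]
    grind
  | andrL d₁ d₂ _ ih =>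
    refine fun h => ih (h.congr fun v => ?_)
    simp only [occursIn, Multiset.mem_cons, Prod.mk.injEq]
    grind
  | andrR d₁ d₂ _ ih =>
    refine fun h => ih (h.congr fun v => ?_)
    simp only [occursIn, Multiset.mem_cons, Prod.mk.injEq]
    grind
  | boxr hf d _ ih => exact fun h => ih (h.box hf)
  | @pr R Γ w u x φ R' Γ' hp d _ ih =>
    refine fun h => ih (h.congr fun v => ?_)
    obtain ⟨s, hs, _⟩ := hp
    have hu : occursIn u R ((w, Fml.dia x φ) ::ₘ Γ) :=
      hs.occurs (Or.inr ⟨_, Multiset.mem_cons_self _ _⟩)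
    constructor
    · simp only [occursIn, Multiset.mem_cons, Prod.mk.injEq]
      grind
    · rintro (h1 | ⟨ψ, h1⟩)
      · exact Or.inl h1
      · rcases Multiset.mem_cons.1 h1 with h1 | h1
        · exact Or.inr ⟨ψ, h1 ▸ Multiset.mem_cons_self _ _⟩
        · rcases Multiset.mem_cons.1 h1 with h1 | h1
          · obtain ⟨rfl, rfl⟩ := Prod.mk.inj h1
            exact hu
          · exact Or.inr ⟨ψ, Multiset.mem_cons_of_mem h1⟩

/-- Let `S` be a CFCST system over `Σ`.  Every derivation in
`Km(S)L` of a labelled sequent `∅ ⊢ w:φ` is a labelled tree derivation with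
the fixed root property, with root `w`: every sequent occurring in it is a
labelled tree sequent rooted at `w`. -/
theorem kmL_tree_derivations {α : Type} (bar : α → α)
    (hbar : Function.Involutive bar) (S : CFCST α bar)
    (w : ℕ) (φ : Fml α) (d : DTree bar S.rules (0 : RAtms α) ({(w, φ)} : LFmls α))
    (R' : RAtms α) (Γ' : LFmls α) (h : InDer d R' Γ') :
    TreeSeq R' Γ' w := by
  refine InDer.tree h ⟨Or.inr ⟨φ, Multiset.mem_singleton_self _⟩, fun v hv => ?_⟩
  have hvw : v = w := by
    rcases hv with ⟨_, _, _, hm, _⟩ | ⟨ψ, hm⟩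
    · exact absurd hm (Multiset.notMem_zero _)
    · exact (Prod.mk.inj (Multiset.mem_singleton.1 hm)).1
  subst hvw
  refine ⟨[], TPath.nil _, fun m hm => ?_⟩
  cases hm with
  | nil => rfl
  | cons he _ => exact absurd he (Multiset.notMem_zero _)

end GrammarLogic
end

section
/- Let S be a CFCST system over Σ and let Λ := R ⊢ Γ. If the labelled sequent R, R_x wu ⊢ Γ is derivable in G3Km(S) and there is a (possibly empty) propagation path π(w,u) in the propagation graph of Λ such that x →*_S s_π(w,u), then R ⊢ Γ is derivable in G3Km(S). -/
/-!
Labelled sequent calculi for context-free grammar logics with converse.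
-/

namespace GrammarLogic

/-- Action of a label renaming on relational atoms. -/
def mapA {α : Type} (f : ℕ → ℕ) (a : α × ℕ × ℕ) : α × ℕ × ℕ := (a.1, f a.2.1, f a.2.2)

/-- Action of a label renaming on labelled formulae. -/
def mapF {α : Type} (f : ℕ → ℕ) (a : ℕ × Fml α) : ℕ × Fml α := (f a.1, a.2)

theorem chain_map {α : Type} (f : ℕ → ℕ) {s : List α} {w u : ℕ} {C : RAtms α}
    (h : ChainR s w u C) : ChainR s (f w) (f u) (C.map (mapA f)) := by
  induction h with
  | nil w => exact ChainR.nil _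
  | cons h ih => rw [Multiset.map_cons]; exact ChainR.cons ih

theorem exists_fresh {α : Type} (R : RAtms α) (Γ : LFmls α) : ∃ v, ¬ occursIn v R Γ := by
  classical
  have hfin : {v | occursIn v R Γ}.Finite := by
    apply Set.Finite.subset (s := ↑((R.map (fun a => a.2.1)).toFinset ∪
      (R.map (fun a => a.2.2)).toFinset ∪ (Γ.map (fun a => a.1)).toFinset))
      (Finset.finite_toSet _)
    rintro v (⟨x, w, u, h, rfl | rfl⟩ | ⟨φ, h⟩)
    · simp only [Finset.coe_union, Set.mem_union, Finset.mem_coe, Multiset.mem_toFinset,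
        Multiset.mem_map]
      exact Or.inl (Or.inl ⟨_, h, rfl⟩)
    · simp only [Finset.coe_union, Set.mem_union, Finset.mem_coe, Multiset.mem_toFinset,
        Multiset.mem_map]
      exact Or.inl (Or.inr ⟨_, h, rfl⟩)
    · simp only [Finset.coe_union, Set.mem_union, Finset.mem_coe, Multiset.mem_toFinset,
        Multiset.mem_map]
      exact Or.inr ⟨_, h, rfl⟩
  obtain ⟨v, hv⟩ := hfin.infinite_compl.nonempty
  exact ⟨v, hv⟩

/-- Label substitution together with weakening of relational atoms. -/
theorem subst_weak {α : Type} {bar : α → α} {P : Set (α × List α)} {R : RAtms α}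
    {Γ : LFmls α} (h : Der bar P True False True True R Γ) :
    ∀ (f : ℕ → ℕ) (R' : RAtms α), 
      Der bar P True False True True (R.map (mapA f) + R') (Γ.map (mapF f)) := by
  induction h with
  | id R Γ w p =>
    intro f R'
    simp only [Multiset.map_cons]
    exact Der.id _ _ _ _
  | orr _ ih =>
    intro f R'
    have := ih f R'
    simp only [Multiset.map_cons] at this ⊢
    exact Der.orr this
  | andr _ _ ih1 ih2 =>
    intro f R'
    have h1 := ih1 f R'
    have h2 := ih2 f R'
    simp only [Multiset.map_cons] at h1 h2 ⊢
    exact Der.andr h1 h2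
  | @boxr R Γ w u x φ hn _ ih =>
    intro f R'
    obtain ⟨v, hv⟩ := exists_fresh (R.map (mapA f) + R')
      (((w, Fml.box x φ) ::ₘ Γ).map (mapF f))
    have h1 := ih (Function.update f u v) R'
    have hw : w ≠ u := by
      rintro rfl
      exact hn (Or.inr ⟨Fml.box x φ, Multiset.mem_cons_self _ _⟩)
    have hR : R.map (mapA (Function.update f u v)) = R.map (mapA f) := by
      apply Multiset.map_congr rfl
      rintro ⟨y, a, b⟩ hm
      have ha : a ≠ u := fun e => hn (Or.inl ⟨y, a, b, hm, Or.inl e.symm⟩)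
      have hb : b ≠ u := fun e => hn (Or.inl ⟨y, a, b, hm, Or.inr e.symm⟩)
      simp [mapA, ha, hb]
    have hG : Γ.map (mapF (Function.update f u v)) = Γ.map (mapF f) := by
      apply Multiset.map_congr rfl
      rintro ⟨a, ψ⟩ hm
      have ha : a ≠ u := by
        rintro rfl
        exact hn (Or.inr ⟨ψ, Multiset.mem_cons_of_mem hm⟩)
      simp [mapF, ha]
    simp only [Multiset.map_cons, hR, hG] at h1 hv ⊢
    have e1 : mapA (Function.update f u v) (x, w, u) = (x, f w, v) := by
      simp [mapA, hw]
    have e2 : mapF (Function.update f u v) (u, φ) = (v, φ) := by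
      simp [mapF]
    rw [e1, e2, Multiset.cons_add] at h1
    exact Der.boxr hv h1
  | diar g _ ih =>
    intro f R'
    have h1 := ih f R'
    simp only [Multiset.map_cons, Multiset.cons_add] at h1 ⊢
    exact Der.diar g h1
  | pr g => exact g.elim
  | prodr g hr hc _ ih =>
    intro f R'
    have h1 := ih f R'
    simp only [Multiset.map_cons, Multiset.map_add, Multiset.cons_add, add_assoc] at h1 ⊢
    exact Der.prodr g hr (chain_map f hc) h1
  | cnvr g _ ih =>
    intro f R'
    have h1 := ih f R'
    simp only [Multiset.map_cons, Multiset.cons_add] at h1 ⊢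
    exact Der.cnvr g h1

theorem weak {α : Type} {bar : α → α} {P : Set (α × List α)} {R R' : RAtms α}
    {Γ : LFmls α} (h : Der bar P True False True True R Γ) (hle : R ≤ R') :
    Der bar P True False True True R' Γ := by
  obtain ⟨Q, rfl⟩ := Multiset.le_iff_exists_add.mp hle
  have h1 := subst_weak h id Q
  have e1 : (mapA id : α × ℕ × ℕ → _) = id := rfl
  have e2 : (mapF id : ℕ × Fml α → _) = id := rfl
  rwa [e1, e2, Multiset.map_id, Multiset.map_id] at h1

theorem del_conv {α : Type} {bar : α → α} (hbar : Function.Involutive bar)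
    {P : Set (α × List α)} {R : RAtms α} {Γ : LFmls α} {c : α} {w u : ℕ}
    (he : (bar c, u, w) ∈ R)
    (h : Der bar P True False True True ((c, w, u) ::ₘ R) Γ) :
    Der bar P True False True True R Γ := by
  obtain ⟨Q, rfl⟩ := Multiset.exists_cons_of_mem he
  apply Der.cnvr trivial
  rw [hbar c, Multiset.cons_swap]
  exact h

theorem del_edge {α : Type} {bar : α → α} (hbar : Function.Involutive bar)
    {P : Set (α × List α)} {R : RAtms α} {Γ : LFmls α} {c : α} {w u : ℕ}
    (he : Edge bar R w u c)
    (h : Der bar P True False True True ((c, w, u) ::ₘ R) Γ) :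
    Der bar P True False True True R Γ := by
  rcases he with he | he
  · apply del_conv hbar (c := bar c) (w := u) (u := w) (by rwa [hbar c])
    apply del_conv hbar (c := c) (w := w) (u := u) (Multiset.mem_cons_self _ _)
    exact weak h (Multiset.cons_le_cons _ (Multiset.le_cons_self _ _))
  · exact del_conv hbar he h

theorem edge_mono {α : Type} {bar : α → α} {R R' : RAtms α} (hle : R ≤ R') {w u : ℕ} {c : α}
    (he : Edge bar R w u c) : Edge bar R' w u c :=
  he.imp (Multiset.mem_of_le hle) (Multiset.mem_of_le hle)

theorem path_mono {α : Type} {bar : α → α} {R R' : RAtms α} (hle : R ≤ R') {w u : ℕ}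
    {s : List α} (h : PPath bar R w u s) : PPath bar R' w u s := by
  induction h with
  | nil w => exact PPath.nil w
  | cons e _ ih => exact PPath.cons (edge_mono hle e) ih

theorem path_append {α : Type} {bar : α → α} {R : RAtms α} {w v u : ℕ}
    {s t : List α} (h : PPath bar R w v s) (h2 : PPath bar R v u t) :
    PPath bar R w u (s ++ t) := by
  induction h with
  | nil w => exact h2
  | cons e _ ih => exact PPath.cons e (ih h2)

theorem path_split {α : Type} {bar : α → α} {R : RAtms α} {u : ℕ} {t : List α} :
    ∀ {s : List α} {w : ℕ}, PPath bar R w u (s ++ t) →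
      ∃ v, PPath bar R w v s ∧ PPath bar R v u t
  | [], w, h => ⟨w, PPath.nil w, h⟩
  | c :: s, w, h => by
    cases h with
    | cons e h' =>
      obtain ⟨v, h1, h2⟩ := path_split h'
      exact ⟨v, PPath.cons e h1, h2⟩

/-- A propagation path yields a chain of atoms that can be deleted. -/
theorem path_chain {α : Type} {bar : α → α} (hbar : Function.Involutive bar)
    {P : Set (α × List α)} {R : RAtms α} {w u : ℕ} {s : List α} (h : PPath bar R w u s) :
    ∃ C, ChainR s w u C ∧ ∀ Γ, Der bar P True False True True (C + R) Γ →
      Der bar P True False True True R Γ := by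
  induction h with
  | nil w => exact ⟨0, ChainR.nil w, fun Γ h => by rwa [zero_add] at h⟩
  | cons e _ ih =>
    obtain ⟨C, hC, hd⟩ := ih
    refine ⟨_, ChainR.cons hC, fun Γ h => hd Γ ?_⟩
    rw [Multiset.cons_add] at h
    exact del_edge hbar (edge_mono (Multiset.le_add_left _ _) e) h

theorem path_rewrite {α : Type} {bar : α → α} (hbar : Function.Involutive bar)
    {P : Set (α × List α)} {w u : ℕ} {s t : List α}
    (hst : Relation.ReflTransGen (OneStep P) s t) :
    ∀ R : RAtms α, PPath bar R w u t →
    ∃ R', R ≤ R' ∧ PPath bar R' w u s ∧ ∀ Γ, Der bar P True False True True R' Γ →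
      Der bar P True False True True R Γ := by
  induction hst with
  | refl => exact fun R h => ⟨R, le_rfl, h, fun _ h => h⟩
  | tail _ hstep ih =>
    intro R hp
    obtain ⟨l, v, x, r, hr, rfl, rfl⟩ := hstep
    obtain ⟨b, hlr, hv⟩ := path_split hp
    obtain ⟨a, hl, hr'⟩ := path_split hlr
    obtain ⟨C, hC, hd⟩ := path_chain (P := P) hbar hr'
    have hle : R ≤ (x, a, b) ::ₘ R := Multiset.le_cons_self _ _
    obtain ⟨R', h1, h2, h3⟩ := ih ((x, a, b) ::ₘ R)
      (path_append (path_mono hle hl)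
        (PPath.cons (Or.inl (Multiset.mem_cons_self _ _)) (path_mono hle hv)))
    refine ⟨R', hle.trans h1, h2, fun Γ h => hd Γ ?_⟩
    exact Der.prodr trivial hr hC (weak (h3 Γ h) (Multiset.le_add_left _ _))

/-- Let `S` be a CFCST system over `Σ` and `Λ := R ⊢ Γ`.  If
`R, R_x wu ⊢ Γ` is derivable in `G3Km(S)` and there is a (possibly empty)
propagation path `π(w,u)` in the propagation graph of `Λ` such that
`x →*_S s_π(w,u)`, then `R ⊢ Γ` is derivable in `G3Km(S)`. -/
theorem delete_relational_atom {α : Type} (bar : α → α)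
    (hbar : Function.Involutive bar) (S : CFCST α bar)
    (R : RAtms α) (Γ : LFmls α) (x : α) (w u : ℕ) (t : List α)
    (hder : G3Km bar S ((x, w, u) ::ₘ R) Γ)
    (hpath : PPath bar R w u t) (hlang : Lang S.rules x t) :
    G3Km bar S R Γ := by
  obtain ⟨R', hle, hp, hd⟩ := path_rewrite (P := S.rules) hbar hlang R hpath
  apply hd
  cases hp with
  | cons e h =>
    cases h
    exact del_edge hbar e (weak hder (Multiset.cons_le_cons _ hle))

end GrammarLogic
end

section
/- Let S be a CFCST system over Σ. Every proof in Km(S)L of a labelled sequent R, R_x wu ⊢ Γ can be transformed into a proof in Km(S)L of R, R_x̄ uw ⊢ Γ whose height is less than or equal to that of the given proof, and vice versa (where the height of a proof is the maximal number of sequents occurring on a branch from the end sequent to an initial sequent). In particular, the residuation rule inferring R, R_x̄ uw ⊢ Γ from R, R_x wu ⊢ Γ is height-preserving admissible in Km(S)L. -/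
/-!
Labelled sequent calculi for context-free grammar logics with converse.
-/

namespace GrammarLogic

/-- The refined labelled calculus `Km(S)L` indexed by the height of derivations:
`KmLH bar P h R Γ` means that `R ⊢ Γ` has a `Km(S)L`-derivation of height `h`
(the height of a proof being the maximal number of sequents occurring on a
branch from the end sequent to an initial sequent). -/
inductive KmLH {α : Type} (bar : α → α) (P : Set (α × List α)) :
    ℕ → RAtms α → LFmls α → Prop
  | id (R : RAtms α) (Γ : LFmls α) (w p : ℕ) :
      KmLH bar P 1 R ((w, Fml.pos p) ::ₘ (w, Fml.neg p) ::ₘ Γ)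
  | orr {h : ℕ} {R : RAtms α} {Γ : LFmls α} {w : ℕ} {φ ψ : Fml α} :
      KmLH bar P h R ((w, φ) ::ₘ (w, ψ) ::ₘ Γ) →
      KmLH bar P (h + 1) R ((w, Fml.or φ ψ) ::ₘ Γ)
  | andr {h₁ h₂ : ℕ} {R : RAtms α} {Γ : LFmls α} {w : ℕ} {φ ψ : Fml α} :
      KmLH bar P h₁ R ((w, φ) ::ₘ Γ) → KmLH bar P h₂ R ((w, ψ) ::ₘ Γ) →
      KmLH bar P (max h₁ h₂ + 1) R ((w, Fml.and φ ψ) ::ₘ Γ)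
  | boxr {h : ℕ} {R : RAtms α} {Γ : LFmls α} {w u : ℕ} {x : α} {φ : Fml α} :
      ¬ occursIn u R ((w, Fml.box x φ) ::ₘ Γ) →
      KmLH bar P h ((x, w, u) ::ₘ R) ((u, φ) ::ₘ Γ) →
      KmLH bar P (h + 1) R ((w, Fml.box x φ) ::ₘ Γ)
  | pr {h : ℕ} {R : RAtms α} {Γ : LFmls α} {w u : ℕ} {x : α} {φ : Fml α} :
      PropCond bar P R x w u →
      KmLH bar P h R ((w, Fml.dia x φ) ::ₘ (u, φ) ::ₘ Γ) →
      KmLH bar P (h + 1) R ((w, Fml.dia x φ) ::ₘ Γ)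

theorem edge_cons_congr {α : Type} {bar : α → α} {R R' : RAtms α}
    (hE : ∀ w u c, Edge bar R w u c ↔ Edge bar R' w u c) (a : α × ℕ × ℕ) :
    ∀ w u c, Edge bar (a ::ₘ R) w u c ↔ Edge bar (a ::ₘ R') w u c := by
  intro w u c
  have := hE w u c
  simp only [Edge, Multiset.mem_cons] at this ⊢
  tauto

theorem ppath_congr {α : Type} {bar : α → α} {R R' : RAtms α}
    (hE : ∀ w u c, Edge bar R w u c ↔ Edge bar R' w u c) {w u : ℕ} {s : List α}
    (hp : PPath bar R w u s) : PPath bar R' w u s := by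
  induction hp with
  | nil w => exact PPath.nil w
  | cons e _ ih => exact PPath.cons ((hE _ _ _).1 e) ih

theorem occursIn_congr {α : Type} {bar : α → α} {R R' : RAtms α} {Γ : LFmls α}
    (hE : ∀ w u c, Edge bar R w u c ↔ Edge bar R' w u c) {v : ℕ}
    (ho : occursIn v R' Γ) : occursIn v R Γ := by
  rcases ho with ⟨x, w, u, hm, hv⟩ | hΓ
  · rcases (hE w u x).2 (Or.inl hm) with h1 | h1
    · exact Or.inl ⟨_, _, _, h1, hv⟩
    · exact Or.inl ⟨_, _, _, h1, hv.symm⟩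
  · exact Or.inr hΓ

/-- Derivations only depend on the propagation graph. -/
theorem kmLH_congr {α : Type} {bar : α → α} {P : Set (α × List α)} {h : ℕ}
    {R : RAtms α} {Γ : LFmls α} (hd : KmLH bar P h R Γ) :
    ∀ R' : RAtms α, (∀ w u c, Edge bar R w u c ↔ Edge bar R' w u c) →
      KmLH bar P h R' Γ := by
  induction hd with
  | id R Γ w p => exact fun R' _ => KmLH.id R' Γ w p
  | orr _ ih => exact fun R' hE => KmLH.orr (ih R' hE)
  | andr _ _ ih1 ih2 => exact fun R' hE => KmLH.andr (ih1 R' hE) (ih2 R' hE)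
  | boxr hn _ ih =>
    exact fun R' hE => KmLH.boxr (fun ho => hn (occursIn_congr hE ho))
      (ih _ (edge_cons_congr hE _))
  | pr hc _ ih =>
    intro R' hE
    obtain ⟨s, hp, hl⟩ := hc
    exact KmLH.pr ⟨s, ppath_congr hE hp, hl⟩ (ih R' hE)

theorem edge_residuation {α : Type} {bar : α → α} (hbar : Function.Involutive bar)
    (R : RAtms α) (x : α) (w u a b : ℕ) (c : α) :
    Edge bar ((x, w, u) ::ₘ R) a b c ↔ Edge bar ((bar x, u, w) ::ₘ R) a b c := by
  have h1 : bar c = x ↔ c = bar x :=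
    ⟨fun h => by rw [← h, hbar c], fun h => by rw [h, hbar x]⟩
  have h2 : bar c = bar x ↔ c = x := hbar.injective.eq_iff
  simp only [Edge, Multiset.mem_cons, Prod.mk.injEq, h1, h2]
  tauto

/-- Let `S` be a CFCST system over `Σ`.  Every proof in
`Km(S)L` of `R, R_x wu ⊢ Γ` can be transformed into a proof in `Km(S)L` of
`R, R_x̄ uw ⊢ Γ` of smaller or equal height, and vice versa.  In particular the
residuation rule, inferring `R, R_x̄ uw ⊢ Γ` from `R, R_x wu ⊢ Γ`, is
height-preserving admissible in `Km(S)L`. -/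
theorem residuation_hp_admissible {α : Type} (bar : α → α)
    (hbar : Function.Involutive bar) (S : CFCST α bar)
    (h : ℕ) (R : RAtms α) (Γ : LFmls α) (x : α) (w u : ℕ) :
    (KmLH bar S.rules h ((x, w, u) ::ₘ R) Γ →
      ∃ h' ≤ h, KmLH bar S.rules h' ((bar x, u, w) ::ₘ R) Γ) ∧
    (KmLH bar S.rules h ((bar x, u, w) ::ₘ R) Γ →
      ∃ h' ≤ h, KmLH bar S.rules h' ((x, w, u) ::ₘ R) Γ) := by
  exact ⟨fun hd => ⟨h, le_rfl, kmLH_congr hd _ (edge_residuation hbar R x w u)⟩,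
    fun hd => ⟨h, le_rfl, kmLH_congr hd _
      fun a b c => (edge_residuation hbar R x w u a b c).symm⟩⟩

end GrammarLogic
end
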